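/- Let φ₁, φ₂ be GF²-sentences and Σ a signature. Then φ₁ ⊨_Σ φ₂ if and only if for every model 𝔄 of φ₁ of finite outdegree there is a model 𝔅 of φ₂ such that: (1) for every a ∈ A there is b ∈ B with (𝔄,a) ∼_Σ (𝔅,b); and (2) for every b ∈ B and every k ≥ 0 there is a ∈ A with (𝔄,a) ∼^k_Σ (𝔅,b). -/

import Mathlib

/-! Core: relational two-variable first-order logic with equality (unary and
binary predicates only), the guarded fragment GF², structures, satisfaction,
atomic types, (bounded/delimited) guarded bisimulations, forest structures. -/

namespace GFC

inductive Var : Type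
  | x
  | y
deriving DecidableEq

/-- Formulas of two-variable relational FO with equality (variables `x`, `y`). -/
inductive Fml (U B : Type) : Type
  | uatom : U → Var → Fml U B
  | batom : B → Var → Var → Fml U B
  | eqv   : Var → Var → Fml U B
  | fls   : Fml U B
  | neg   : Fml U B → Fml U B
  | conj  : Fml U B → Fml U B → Fml U B
  | disj  : Fml U B → Fml U B → Fml U B
  | impl  : Fml U B → Fml U B → Fml U B
  | all   : Var → Fml U B → Fml U B
  | ex    : Var → Fml U B → Fml U B

namespace Fml

variable {U B : Type}

def free : Fml U B → Set Var
  | uatom _ v => {v}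
  | batom _ v w => {v, w}
  | eqv v w => {v, w}
  | fls => ∅
  | neg φ => φ.free
  | conj φ ψ => φ.free ∪ ψ.free
  | disj φ ψ => φ.free ∪ ψ.free
  | impl φ ψ => φ.free ∪ ψ.free
  | all v φ => φ.free \ {v}
  | ex v φ => φ.free \ {v}

def IsSentence (φ : Fml U B) : Prop := φ.free = ∅

def upreds : Fml U B → Set U
  | uatom P _ => {P}
  | batom _ _ _ => ∅
  | eqv _ _ => ∅
  | fls => ∅
  | neg φ => φ.upreds
  | conj φ ψ => φ.upreds ∪ ψ.upreds
  | disj φ ψ => φ.upreds ∪ ψ.upreds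
  | impl φ ψ => φ.upreds ∪ ψ.upreds
  | all _ φ => φ.upreds
  | ex _ φ => φ.upreds

def bpreds : Fml U B → Set B
  | uatom _ _ => ∅
  | batom R _ _ => {R}
  | eqv _ _ => ∅
  | fls => ∅
  | neg φ => φ.bpreds
  | conj φ ψ => φ.bpreds ∪ ψ.bpreds
  | disj φ ψ => φ.bpreds ∪ ψ.bpreds
  | impl φ ψ => φ.bpreds ∪ ψ.bpreds
  | all _ φ => φ.bpreds
  | ex _ φ => φ.bpreds

def IsAtom : Fml U B → Prop
  | uatom _ _ => True
  | batom _ _ _ => True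
  | eqv _ _ => True
  | _ => False

def IsEqAtom : Fml U B → Prop
  | eqv _ _ => True
  | _ => False

/-- guarded quantifier depth (in GF² formulas every quantifier is guarded) -/
def gdepth : Fml U B → ℕ
  | uatom _ _ => 0
  | batom _ _ _ => 0
  | eqv _ _ => 0
  | fls => 0
  | neg φ => φ.gdepth
  | conj φ ψ => max φ.gdepth ψ.gdepth
  | disj φ ψ => max φ.gdepth ψ.gdepth
  | impl φ ψ => max φ.gdepth ψ.gdepth
  | all _ φ => φ.gdepth + 1
  | ex _ φ => φ.gdepth + 1

/-- subformulas (including the formula itself) -/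
def Subf : Fml U B → Set (Fml U B)
  | uatom P v => {uatom P v}
  | batom R v w => {batom R v w}
  | eqv v w => {eqv v w}
  | fls => {fls}
  | neg φ => insert (neg φ) φ.Subf
  | conj φ ψ => insert (conj φ ψ) (φ.Subf ∪ ψ.Subf)
  | disj φ ψ => insert (disj φ ψ) (φ.Subf ∪ ψ.Subf)
  | impl φ ψ => insert (impl φ ψ) (φ.Subf ∪ ψ.Subf)
  | all v φ => insert (all v φ) φ.Subf
  | ex v φ => insert (ex v φ) φ.Subf

/-- rename the free variables along `f` (bound variables untouched) -/
def renameFree : (Var → Var) → Fml U B → Fml U B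
  | f, uatom P v => uatom P (f v)
  | f, batom R v w => batom R (f v) (f w)
  | f, eqv v w => eqv (f v) (f w)
  | _, fls => fls
  | f, neg φ => neg (renameFree f φ)
  | f, conj φ ψ => conj (renameFree f φ) (renameFree f ψ)
  | f, disj φ ψ => disj (renameFree f φ) (renameFree f ψ)
  | f, impl φ ψ => impl (renameFree f φ) (renameFree f ψ)
  | f, all v φ => all v (renameFree (Function.update f v v) φ)
  | f, ex v φ => ex v (renameFree (Function.update f v v) φ)

end Fml

/-- The two-variable guarded fragment GF²: quantification only in the guarded
patterns `∀v (α → φ)` and `∃v (α ∧ φ)` with `α` an atom containing all free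
variables of `φ` as well as the quantified variable `v`. -/
inductive IsGF2 {U B : Type} : Fml U B → Prop
  | uatom (P : U) (v : Var) : IsGF2 (.uatom P v)
  | batom (R : B) (v w : Var) : IsGF2 (.batom R v w)
  | eqv (v w : Var) : IsGF2 (.eqv v w)
  | fls : IsGF2 .fls
  | neg {φ} : IsGF2 φ → IsGF2 (.neg φ)
  | conj {φ ψ} : IsGF2 φ → IsGF2 ψ → IsGF2 (.conj φ ψ)
  | disj {φ ψ} : IsGF2 φ → IsGF2 ψ → IsGF2 (.disj φ ψ)
  | impl {φ ψ} : IsGF2 φ → IsGF2 ψ → IsGF2 (.impl φ ψ)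
  | allG {v : Var} {α φ : Fml U B} :
      α.IsAtom → IsGF2 φ → φ.free ∪ {v} ⊆ α.free → IsGF2 (.all v (.impl α φ))
  | exG {v : Var} {α φ : Fml U B} :
      α.IsAtom → IsGF2 φ → φ.free ∪ {v} ⊆ α.free → IsGF2 (.ex v (.conj α φ))

/-- openGF²: GF² formulas with exactly one free variable, in which equality is
never used as a guard and which contain no subformula that is a sentence. -/
def IsOpenGF2 {U B : Type} (φ : Fml U B) : Prop :=
  IsGF2 φ ∧ (∃ v, φ.free = {v}) ∧
  (∀ ψ ∈ φ.Subf, ¬ ψ.IsSentence) ∧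
  (∀ ψ ∈ φ.Subf, ∀ (v : Var) (α χ : Fml U B),
      (ψ = .all v (.impl α χ) ∨ ψ = .ex v (.conj α χ)) → ¬ α.IsEqAtom)

/-- relational structures interpreting unary predicates `U` and binary
predicates `B` -/
structure Str (U B : Type) where
  Dom : Type
  nonempty : Nonempty Dom
  u : U → Dom → Prop
  b : B → Dom → Dom → Prop

def upd {D : Type} (σ : Var → D) (v : Var) (d : D) : Var → D :=
  fun w => if w = v then d else σ w

def Sat {U B : Type} (A : Str U B) : Fml U B → (Var → A.Dom) → Prop
  | .uatom P v, σ => A.u P (σ v)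
  | .batom R v w, σ => A.b R (σ v) (σ w)
  | .eqv v w, σ => σ v = σ w
  | .fls, _ => False
  | .neg φ, σ => ¬ Sat A φ σ
  | .conj φ ψ, σ => Sat A φ σ ∧ Sat A ψ σ
  | .disj φ ψ, σ => Sat A φ σ ∨ Sat A ψ σ
  | .impl φ ψ, σ => Sat A φ σ → Sat A ψ σ
  | .all v φ, σ => ∀ d : A.Dom, Sat A φ (upd σ v d)
  | .ex v φ, σ => ∃ d : A.Dom, Sat A φ (upd σ v d)

/-- truth of a sentence in a structure -/
def SatS {U B : Type} (A : Str U B) (φ : Fml U B) : Prop := ∀ σ, Sat A φ σ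

def Entails {U B : Type} (φ ψ : Fml U B) : Prop :=
  ∀ A : Str U B, SatS A φ → SatS A ψ

def Satisfiable {U B : Type} (φ : Fml U B) : Prop := ∃ A : Str U B, SatS A φ

/-- a GF²(Σ)-sentence, for the signature Σ = (SU, SB) -/
def IsGF2Sentence {U B : Type} (SU : Set U) (SB : Set B) (ψ : Fml U B) : Prop :=
  IsGF2 ψ ∧ ψ.IsSentence ∧ ψ.upreds ⊆ SU ∧ ψ.bpreds ⊆ SB

/-- `φ₁ ⊨_Σ φ₂` : GF²(Σ)-entailment -/
def GF2Entails {U B : Type} (SU : Set U) (SB : Set B) (φ₁ φ₂ : Fml U B) : Prop :=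
  ∀ ψ : Fml U B, IsGF2Sentence SU SB ψ → Entails φ₂ ψ → Entails φ₁ ψ

/-- atomic formulas in the variables x, y -/
inductive Atom2 (U B : Type) : Type
  | ua : U → Var → Atom2 U B
  | ba : B → Var → Var → Atom2 U B

def vval {D : Type} (a a' : D) : Var → D
  | .x => a
  | .y => a'

def Atom2.inSig {U B : Type} (SU : Set U) (SB : Set B) : Atom2 U B → Prop
  | .ua P _ => P ∈ SU
  | .ba R _ _ => R ∈ SB

def Atom2.holds {U B : Type} (A : Str U B) (a a' : A.Dom) : Atom2 U B → Prop
  | .ua P v => A.u P (vval a a' v)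
  | .ba R v w => A.b R (vval a a' v) (vval a a' w)

def Atom2.onlyX {U B : Type} : Atom2 U B → Prop
  | .ua _ v => v = Var.x
  | .ba _ v w => v = Var.x ∧ w = Var.x

/-- the atomic 1-type of `a` for the signature `(SU, SB)` (the set of
Σ-atoms in the single variable x satisfied by `a`; this determines the set of
negated atoms as well) -/
def atp1 {U B : Type} (A : Str U B) (SU : Set U) (SB : Set B) (a : A.Dom) :
    Set (Atom2 U B) :=
  {α | α.onlyX ∧ α.inSig SU SB ∧ α.holds A a a}

/-- the atomic 2-type of `(a, a')` for the signature `(SU, SB)` (the set of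
Σ-atoms in x, y satisfied by `(a, a')`; together with `a ≠ a'` this determines
the atomic 2-type) -/
def atp2 {U B : Type} (A : Str U B) (SU : Set U) (SB : Set B) (a a' : A.Dom) :
    Set (Atom2 U B) :=
  {α | α.inSig SU SB ∧ α.holds A a a'}

/-- the atomic 2-type of `(a, a')` is guarded (contains `R x y` or `R y x`
for some binary `R ∈ SB`) -/
def Guarded2 {U B : Type} (A : Str U B) (SB : Set B) (a a' : A.Dom) : Prop :=
  ∃ R ∈ SB, A.b R a a' ∨ A.b R a' a

/-- GF²(Σ)-bisimulation between structures `A` and `Bm` -/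
structure IsBisim {U B : Type} (A Bm : Str U B) (SU : Set U) (SB : Set B)
    (Z : A.Dom → Bm.Dom → Prop) : Prop where
  atom_eq : ∀ {a b}, Z a b → atp1 A SU SB a = atp1 Bm SU SB b
  forth : ∀ {a b}, Z a b → ∀ a', a' ≠ a → Guarded2 A SB a a' →
      ∃ b', b' ≠ b ∧ atp2 A SU SB a a' = atp2 Bm SU SB b b' ∧ Z a' b'
  back : ∀ {a b}, Z a b → ∀ b', b' ≠ b → Guarded2 Bm SB b b' →
      ∃ a', a' ≠ a ∧ atp2 A SU SB a a' = atp2 Bm SU SB b b' ∧ Z a' b'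

/-- `(A, a) ∼_Σ (Bm, b)` -/
def Bisim {U B : Type} (A Bm : Str U B) (SU : Set U) (SB : Set B)
    (a : A.Dom) (b : Bm.Dom) : Prop :=
  ∃ Z, IsBisim A Bm SU SB Z ∧ Z a b

/-- `(A, a) ∼ᵏ_Σ (Bm, b)` : k-GF²(Σ)-bisimilarity -/
def KBisim {U B : Type} (A Bm : Str U B) (SU : Set U) (SB : Set B) :
    ℕ → A.Dom → Bm.Dom → Prop
  | 0, a, b => atp1 A SU SB a = atp1 Bm SU SB b
  | k+1, a, b => atp1 A SU SB a = atp1 Bm SU SB b ∧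
      (∀ a', a' ≠ a → Guarded2 A SB a a' →
        ∃ b', b' ≠ b ∧ atp2 A SU SB a a' = atp2 Bm SU SB b b' ∧
          KBisim A Bm SU SB k a' b') ∧
      (∀ b', b' ≠ b → Guarded2 Bm SB b b' →
        ∃ a', a' ≠ a ∧ atp2 A SU SB a a' = atp2 Bm SU SB b b' ∧
          KBisim A Bm SU SB k a' b')

/-- a (full-signature) atomic 2-type, given as its set of positive atoms,
is guarded -/
def Guarded2Type {U B : Type} (τ : Set (Atom2 U B)) : Prop :=
  ∃ R : B, Atom2.ba R Var.x Var.y ∈ τ ∨ Atom2.ba R Var.y Var.x ∈ τ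

/-- successor-saturated structures -/
def SuccSaturated {U B : Type} (A : Str U B) : Prop :=
  ∀ (a : A.Dom) (τ : Set (Atom2 U B)) (Γ : Set (Fml U B)),
    Guarded2Type τ →
    (∀ ψ ∈ Γ, IsOpenGF2 ψ ∧ ψ.free = {Var.x}) →
    (∀ Γ' : Finset (Fml U B), ↑Γ' ⊆ Γ →
      ∃ a', a' ≠ a ∧ atp2 A Set.univ Set.univ a a' = τ ∧
        ∀ ψ ∈ Γ', Sat A ψ (fun _ => a')) →
    ∃ b', b' ≠ a ∧ atp2 A Set.univ Set.univ a b' = τ ∧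
      ∀ ψ ∈ Γ, Sat A ψ (fun _ => b')

/-- finite outdegree: every element stands in a guarded atomic 2-type (for the
full signature) to only finitely many elements -/
def FiniteOutdeg {U B : Type} (A : Str U B) : Prop :=
  ∀ a : A.Dom, {a' | a' ≠ a ∧ ∃ R : B, A.b R a a' ∨ A.b R a' a}.Finite

/-- Σ-adjacency (edges of the Gaifman graph of the Σ-reduct) -/
def SigAdj {U B : Type} (A : Str U B) (SB : Set B) (a a' : A.Dom) : Prop :=
  a ≠ a' ∧ ∃ R ∈ SB, A.b R a a' ∨ A.b R a' a

/-- A forest structure: a structure whose Gaifman graph is a forest, directed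
by choosing a root for each tree; `parent p c` says that `p` is the
predecessor (parent) of `c`. -/
structure Forest (U B : Type) extends Str U B where
  parent : Dom → Dom → Prop
  parent_unique : ∀ {c p p' : Dom}, parent p c → parent p' c → p = p'
  parent_wf : WellFounded parent
  adj_iff : ∀ a a' : Dom,
    (a ≠ a' ∧ ∃ R : B, b R a a' ∨ b R a' a) ↔ (parent a a' ∨ parent a' a)

namespace Forest

variable {U B : Type}

/-- `a` together with its descendants -/
def desc (F : Forest U B) (a : F.Dom) : Set F.Dom :=
  {c | Relation.ReflTransGen F.parent a c}

/-- the subtrees rooted at `a` and at `a'` are isomorphic -/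
def SubtreeIso (F : Forest U B) (a a' : F.Dom) : Prop :=
  ∃ f : (F.desc a) ≃ (F.desc a'),
    (f ⟨a, Relation.ReflTransGen.refl⟩).val = a' ∧
    (∀ c d : F.desc a, F.parent c.val d.val ↔ F.parent (f c).val (f d).val) ∧
    (∀ (P : U) (c : F.desc a), F.u P c.val ↔ F.u P (f c).val) ∧
    (∀ (R : B) (c d : F.desc a), F.b R c.val d.val ↔ F.b R (f c).val (f d).val)

/-- regular: only finitely many subtrees up to isomorphism -/
def Regular (F : Forest U B) : Prop :=
  ∃ S : Set F.Dom, S.Finite ∧ ∀ a, ∃ a' ∈ S, F.SubtreeIso a' a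

/-- `a ≺ a'` : `a` and `a'` lie in the same Σ-tree and `a` is a proper
ancestor of `a'` -/
def prec (F : Forest U B) (SB : Set B) (a a' : F.Dom) : Prop :=
  Relation.ReflTransGen (SigAdj F.toStr SB) a a' ∧ Relation.TransGen F.parent a a'

end Forest

/-- `a_⊥`-delimited GF²(Σ)-bisimulation: like a GF²(Σ)-bisimulation except that
the back-and-forth conditions are not required at pairs whose first component
is `abot` -/
structure IsPtDelimBisim {U B : Type} (A Bm : Str U B) (SU : Set U) (SB : Set B)
    (abot : A.Dom) (Z : A.Dom → Bm.Dom → Prop) : Prop where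
  atom_eq : ∀ {a b}, Z a b → atp1 A SU SB a = atp1 Bm SU SB b
  forth : ∀ {a b}, Z a b → a ≠ abot → ∀ a', a' ≠ a → Guarded2 A SB a a' →
      ∃ b', b' ≠ b ∧ atp2 A SU SB a a' = atp2 Bm SU SB b b' ∧ Z a' b'
  back : ∀ {a b}, Z a b → a ≠ abot → ∀ b', b' ≠ b → Guarded2 Bm SB b b' →
      ∃ a', a' ≠ a ∧ atp2 A SU SB a a' = atp2 Bm SU SB b b' ∧ Z a' b'

/-- `(A, a) ∼^{a_⊥}_Σ (Bm, b)` -/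
def PtDelimBisim {U B : Type} (A Bm : Str U B) (SU : Set U) (SB : Set B)
    (abot : A.Dom) (a : A.Dom) (b : Bm.Dom) : Prop :=
  ∃ Z, IsPtDelimBisim A Bm SU SB abot Z ∧ Z a b

/-- `A_⊥`-delimited GF²(Σ)-bisimulation between a forest structure `F` and a
structure `Bm`, given by a pair of relations `Z0 (∼⁰)` and `Z1 (∼¹)`. -/
structure IsDelimBisim {U B : Type} (F : Forest U B) (Bm : Str U B)
    (SU : Set U) (SB : Set B) (Abot : Set F.Dom)
    (Z0 Z1 : F.Dom → Bm.Dom → Prop) : Prop where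
  zero : ∀ {a b}, Z0 a b →
    atp1 F.toStr SU SB a = atp1 Bm SU SB b ∧
    (∀ a', a' ≠ a → Guarded2 F.toStr SB a a' →
      ∃ b', b' ≠ b ∧
        ((F.parent a' a ∧ a' ∈ Abot) → Z1 a' b') ∧
        (¬ (F.parent a' a ∧ a' ∈ Abot) → Z0 a' b')) ∧
    (∀ b', b' ≠ b → Guarded2 Bm SB b b' →
      ∃ a', a' ≠ a ∧
        ((F.parent a' a ∧ a' ∈ Abot) → Z1 a' b') ∧
        (¬ (F.parent a' a ∧ a' ∈ Abot) → Z0 a' b'))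
  one : ∀ {a b}, Z1 a b → (∀ p, F.parent p a → p ∉ Abot) →
    atp1 F.toStr SU SB a = atp1 Bm SU SB b ∧
    (∀ a', a' ≠ a → Guarded2 F.toStr SB a a' →
      ∃ b', b' ≠ b ∧
        ((F.parent a a' ∧ a ∈ Abot) → Z0 a' b') ∧
        (¬ (F.parent a a' ∧ a ∈ Abot) → Z1 a' b')) ∧
    (∀ b', b' ≠ b → Guarded2 Bm SB b b' →
      ∃ a', a' ≠ a ∧
        ((F.parent a a' ∧ a ∈ Abot) → Z0 a' b') ∧
        (¬ (F.parent a a' ∧ a ∈ Abot) → Z1 a' b'))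

/-- `(F, a) ∼^{A_⊥}_Σ (Bm, b)` -/
def DelimBisim {U B : Type} (F : Forest U B) (Bm : Str U B)
    (SU : Set U) (SB : Set B) (Abot : Set F.Dom) (a : F.Dom) (b : Bm.Dom) : Prop :=
  ∃ Z0 Z1, IsDelimBisim F Bm SU SB Abot Z0 Z1 ∧ Z0 a b

/-- `cl φ` : the subformulas of `φ` closed under single negation and renaming
of free variables (among x, y) -/
def clSet {U B : Type} (φ : Fml U B) : Set (Fml U B) :=
  {χ | ∃ ψ ∈ φ.Subf, ∃ f : Var → Var,
      χ = ψ.renameFree f ∨ χ = .neg (ψ.renameFree f)}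

/-- a 1-type for `φ₂`: a set of formulas `ψ(x)` from `cl φ₂` such that
`φ₂ ∧ ∃x ⋀ t(x)` is satisfiable -/
def OneType {U B : Type} (φ₂ : Fml U B) (t : Set (Fml U B)) : Prop :=
  t ⊆ clSet φ₂ ∧ (∀ ψ ∈ t, ψ.free ⊆ {Var.x}) ∧
  ∃ (A : Str U B) (a : A.Dom), SatS A φ₂ ∧ ∀ ψ ∈ t, Sat A ψ (fun _ => a)

/-- `tp_Bm(b)` : the 1-type of `b` in `Bm` (w.r.t. `φ₂`) -/
def tpOf {U B : Type} (Bm : Str U B) (φ₂ : Fml U B) (b : Bm.Dom) :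
    Set (Fml U B) :=
  {ψ | ψ ∈ clSet φ₂ ∧ ψ.free ⊆ {Var.x} ∧ Sat Bm ψ (fun _ => b)}

end GFC

/-!
Both directions rest on one fact: over a finite signature there are only finitely many
`k`-bisimulation types, and each of them is definable by a GF² formula of one free variable.

If `φ₁ ⊨_Σ φ₂` and `𝔄 ⊨ φ₁`, the GF²(Σ)-sentence describing the set of `k`-types realised in `𝔄`
is consistent with `φ₂`, which gives models `𝔅ₖ` of `φ₂` realising the same `k`-types as `𝔄`. By
Łoś's theorem their ultraproduct is a model of `φ₂` that realises the same `k`-types as `𝔄` for all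
`k` at once, and it is countably saturated. By a Hennessy–Milner argument, `k`-bisimilarity for all
`k` is then a bisimulation: saturation provides the forth condition and finite outdegree of `𝔄` the
back condition.

Conversely, a model of `φ₁` refuting a consequence `ψ` of `φ₂` can be unravelled along finitely many
representative successors per element. This yields a model of finite outdegree which is
`k`-bisimilar to the original one for the signature and depth of `φ₁` and `ψ`, so it satisfies `φ₁`
and refutes `ψ`; but conditions (1) and (2) transfer `ψ` to it from a model of `φ₂`.
-/

namespace GFC

variable {U B : Type}

instance : Finite Var :=
  Finite.of_surjective (fun b : Bool => cond b Var.x Var.y) fun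
    | .x => ⟨true, rfl⟩
    | .y => ⟨false, rfl⟩

instance : Nontrivial Var := ⟨.x, .y, by simp⟩

theorem Var.eq_or_eq_of_ne {v w : Var} (hvw : v ≠ w) (u : Var) : u = v ∨ u = w := by
  revert hvw
  cases u <;> cases v <;> cases w <;> simp

@[simp]
theorem upd_self {D : Type} (σ : Var → D) (v : Var) (d : D) : upd σ v d v = d := by
  simp [upd]

@[simp]
theorem upd_of_ne {D : Type} (σ : Var → D) {v w : Var} (h : w ≠ v) (d : D) :
    upd σ v d w = σ w := by
  simp [upd, h]

/-! ### Atomic types -/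

section AtomicTypes

variable {A Bm : Str U B} {SU : Set U} {SB : Set B} {a a' : A.Dom} {b b' : Bm.Dom}

theorem atp2_eq_iff :
    atp2 A SU SB a a' = atp2 Bm SU SB b b' ↔
      ∀ α : Atom2 U B, α.inSig SU SB → (α.holds A a a' ↔ α.holds Bm b b') := by
  simp only [atp2, Set.ext_iff, Set.mem_ofPred_eq, and_congr_right_iff]

theorem atp1_eq_iff_atp2_eq :
    atp1 A SU SB a = atp1 Bm SU SB b ↔ atp2 A SU SB a a = atp2 Bm SU SB b b := by
  rw [atp2_eq_iff]
  simp only [atp1, Set.ext_iff, Set.mem_ofPred_eq, and_congr_right_iff]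
  refine ⟨fun h α hα => ?_, fun h α _ hα => h α hα⟩
  cases α with
  | ua P v => cases v <;> exact h (.ua P .x) rfl hα
  | ba R v w => cases v <;> cases w <;> exact h (.ba R .x .x) ⟨rfl, rfl⟩ hα

theorem Guarded2.of_atp2_eq (hg : Guarded2 A SB a a')
    (h : atp2 A SU SB a a' = atp2 Bm SU SB b b') : Guarded2 Bm SB b b' := by
  obtain ⟨R, hR, hab⟩ := hg
  rw [atp2_eq_iff] at h
  exact ⟨R, hR, hab.imp (h (.ba R .x .y) hR).1 (h (.ba R .y .x) hR).1⟩

theorem finite_setOf_inSig (hU : SU.Finite) (hB : SB.Finite) :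
    {α : Atom2 U B | α.inSig SU SB}.Finite := by
  have hua : ((fun p : U × Var => Atom2.ua (B := B) p.1 p.2) '' SU ×ˢ Set.univ).Finite :=
    (hU.prod Set.finite_univ).image _
  have hba : ((fun p : B × Var × Var => Atom2.ba (U := U) p.1 p.2.1 p.2.2) ''
      SB ×ˢ Set.univ).Finite :=
    (hB.prod Set.finite_univ).image _
  refine (hua.union hba).subset fun α hα => ?_
  cases α with
  | ua P v => exact Or.inl ⟨(P, v), ⟨hα, trivial⟩, rfl⟩
  | ba R v w => exact Or.inr ⟨(R, v, w), ⟨hα, trivial⟩, rfl⟩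

theorem atp1_subset_inSig : atp1 A SU SB a ⊆ {α | α.inSig SU SB} := fun _ h => h.2.1

theorem atp2_subset_inSig : atp2 A SU SB a a' ⊆ {α | α.inSig SU SB} := fun _ h => h.1

/-- The Σ-neighbours of `a`: the elements forming a guarded 2-type with `a`. -/
def neighbors (A : Str U B) (SB : Set B) (a : A.Dom) : Set A.Dom :=
  {a' | a' ≠ a ∧ Guarded2 A SB a a'}

theorem FiniteOutdeg.finite_neighbors (hA : FiniteOutdeg A) : (neighbors A SB a).Finite :=
  (hA a).subset fun _ ⟨hne, R, _, hR⟩ => ⟨hne, R, hR⟩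

end AtomicTypes

/-! ### Bounded bisimilarity and types -/

section BoundedBisimilarity

variable {A Bm : Str U B} {SU : Set U} {SB : Set B}

/-- The one-step condition shared by `IsBisim` and `KBisim`: equal 1-types, and every neighbour on
one side is matched by a neighbour on the other side that is related to it by `Z`. -/
def BackAndForth (A Bm : Str U B) (SU : Set U) (SB : Set B) (Z : A.Dom → Bm.Dom → Prop)
    (a : A.Dom) (b : Bm.Dom) : Prop :=
  atp1 A SU SB a = atp1 Bm SU SB b ∧
    (∀ a', a' ≠ a → Guarded2 A SB a a' →
      ∃ b', b' ≠ b ∧ atp2 A SU SB a a' = atp2 Bm SU SB b b' ∧ Z a' b') ∧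
    (∀ b', b' ≠ b → Guarded2 Bm SB b b' →
      ∃ a', a' ≠ a ∧ atp2 A SU SB a a' = atp2 Bm SU SB b b' ∧ Z a' b')

theorem BackAndForth.imp {Z Z' : A.Dom → Bm.Dom → Prop} (hZ : ∀ a b, Z a b → Z' a b)
    {a : A.Dom} {b : Bm.Dom} (h : BackAndForth A Bm SU SB Z a b) :
    BackAndForth A Bm SU SB Z' a b :=
  ⟨h.1,
    fun a' hne hg => (h.2.1 a' hne hg).imp fun b' hb' => ⟨hb'.1, hb'.2.1, hZ a' b' hb'.2.2⟩,
    fun b' hne hg => (h.2.2 b' hne hg).imp fun a' ha' => ⟨ha'.1, ha'.2.1, hZ a' b' ha'.2.2⟩⟩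

theorem kBisim_succ_iff {k : ℕ} {a : A.Dom} {b : Bm.Dom} :
    KBisim A Bm SU SB (k + 1) a b ↔ BackAndForth A Bm SU SB (KBisim A Bm SU SB k) a b :=
  Iff.rfl

theorem KBisim.atp1_eq {k : ℕ} {a : A.Dom} {b : Bm.Dom} (h : KBisim A Bm SU SB k a b) :
    atp1 A SU SB a = atp1 Bm SU SB b := by
  cases k with
  | zero => exact h
  | succ k => exact h.1

theorem KBisim.of_succ {k : ℕ} {a : A.Dom} {b : Bm.Dom} (h : KBisim A Bm SU SB (k + 1) a b) :
    KBisim A Bm SU SB k a b := by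
  induction k generalizing a b with
  | zero => exact h.1
  | succ k ih => exact kBisim_succ_iff.2 ((kBisim_succ_iff.1 h).imp fun _ _ => ih)

theorem KBisim.mono {k l : ℕ} (hkl : k ≤ l) {a : A.Dom} {b : Bm.Dom}
    (h : KBisim A Bm SU SB l a b) : KBisim A Bm SU SB k a b := by
  induction hkl with
  | refl => exact h
  | step _ ih => exact ih h.of_succ

theorem Bisim.kBisim {a : A.Dom} {b : Bm.Dom} (h : Bisim A Bm SU SB a b) (k : ℕ) :
    KBisim A Bm SU SB k a b := by
  obtain ⟨Z, hZ, hab⟩ := h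
  induction k generalizing a b with
  | zero => exact hZ.atom_eq hab
  | succ k ih =>
    have hstep : BackAndForth A Bm SU SB Z a b := ⟨hZ.atom_eq hab, hZ.forth hab, hZ.back hab⟩
    exact kBisim_succ_iff.2 (hstep.imp fun _ _ => ih)

/-- The objects that serve as types of depth `k`: at depth `k + 1`, an atomic 1-type together with
a set of pairs consisting of the 2-type to a neighbour and the type of depth `k` of that
neighbour. -/
def KType (U B : Type) : ℕ → Type
  | 0 => Set (Atom2 U B)
  | k + 1 => Set (Atom2 U B) × Set (Set (Atom2 U B) × KType U B k)

/-- The Σ-type of depth `k` of an element, a complete invariant for `k`-bisimilarity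
(`kBisim_iff_kType_eq`). -/
def kType (A : Str U B) (SU : Set U) (SB : Set B) : (k : ℕ) → A.Dom → KType U B k
  | 0, a => atp1 A SU SB a
  | k + 1, a =>
    (atp1 A SU SB a, (fun a' => (atp2 A SU SB a a', kType A SU SB k a')) '' neighbors A SB a)

theorem kType_succ_eq_iff {k : ℕ} {a : A.Dom} {t : KType U B (k + 1)} :
    kType A SU SB (k + 1) a = t ↔ atp1 A SU SB a = t.1 ∧
      (fun a' => (atp2 A SU SB a a', kType A SU SB k a')) '' neighbors A SB a = t.2 :=
  Prod.ext_iff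

theorem kBisim_iff_kType_eq {k : ℕ} {a : A.Dom} {b : Bm.Dom} :
    KBisim A Bm SU SB k a b ↔ kType A SU SB k a = kType Bm SU SB k b := by
  induction k generalizing a b with
  | zero => exact Iff.rfl
  | succ k ih =>
    rw [kBisim_succ_iff, kType_succ_eq_iff, BackAndForth]
    refine and_congr Iff.rfl (Iff.trans (and_congr ?_ ?_) Set.Subset.antisymm_iff.symm) <;>
      simp only [Set.image_subset_iff, ih]
    · refine ⟨fun h a' ⟨hne, hg⟩ => ?_, fun h a' hne hg => ?_⟩
      · obtain ⟨b', hne', hat, hk⟩ := h a' hne hg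
        exact ⟨b', ⟨hne', hg.of_atp2_eq hat⟩, Prod.ext hat.symm hk.symm⟩
      · obtain ⟨b', ⟨hne', _⟩, heq⟩ := h ⟨hne, hg⟩
        exact ⟨b', hne', (congrArg Prod.fst heq).symm, (congrArg Prod.snd heq).symm⟩
    · refine ⟨?_, fun h b' hne hg => ?_⟩
      · rintro h _ ⟨b', ⟨hne, hg⟩, rfl⟩
        obtain ⟨a', hne', hat, hk⟩ := h b' hne hg
        exact ⟨a', ⟨hne', hg.of_atp2_eq hat.symm⟩, Prod.ext hat hk⟩
      · obtain ⟨a', ⟨hne', _⟩, heq⟩ := h ⟨b', ⟨hne, hg⟩, rfl⟩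
        exact ⟨a', hne', congrArg Prod.fst heq, congrArg Prod.snd heq⟩

theorem KBisim.refl (A : Str U B) (SU : Set U) (SB : Set B) (k : ℕ) (a : A.Dom) :
    KBisim A A SU SB k a a :=
  kBisim_iff_kType_eq.2 rfl

theorem KBisim.symm {k : ℕ} {a : A.Dom} {b : Bm.Dom} (h : KBisim A Bm SU SB k a b) :
    KBisim Bm A SU SB k b a :=
  kBisim_iff_kType_eq.2 (kBisim_iff_kType_eq.1 h).symm

theorem KBisim.trans {C : Str U B} {k : ℕ} {a : A.Dom} {b : Bm.Dom} {c : C.Dom}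
    (hab : KBisim A Bm SU SB k a b) (hbc : KBisim Bm C SU SB k b c) : KBisim A C SU SB k a c :=
  kBisim_iff_kType_eq.2 ((kBisim_iff_kType_eq.1 hab).trans (kBisim_iff_kType_eq.1 hbc))

/-- The types of depth `k` realised in some structure. -/
def realizedKTypes (SU : Set U) (SB : Set B) (k : ℕ) : Set (KType U B k) :=
  {t | ∃ (A : Str U B) (a : A.Dom), kType A SU SB k a = t}

/-- The pairs that can occur in the second component of a realised type of depth `k + 1`. -/
def possibleSuccessors (SU : Set U) (SB : Set B) (k : ℕ) :
    Set (Set (Atom2 U B) × KType U B k) :=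
  {τ | τ ⊆ {α | α.inSig SU SB}} ×ˢ realizedKTypes SU SB k

theorem snd_kType_succ_subset_possibleSuccessors (A : Str U B) (k : ℕ) (a : A.Dom) :
    (kType A SU SB (k + 1) a).2 ⊆ possibleSuccessors SU SB k := by
  rintro _ ⟨a', -, rfl⟩
  exact ⟨atp2_subset_inSig, A, a', rfl⟩

theorem finite_realizedKTypes (hU : SU.Finite) (hB : SB.Finite) (k : ℕ) :
    (realizedKTypes SU SB k).Finite := by
  have hatoms := (finite_setOf_inSig hU hB).finite_subsets
  induction k with
  | zero =>
    refine hatoms.subset ?_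
    rintro _ ⟨A, a, rfl⟩
    exact atp1_subset_inSig
  | succ k ih =>
    refine (hatoms.prod (hatoms.prod ih).finite_subsets).subset ?_
    rintro _ ⟨A, a, rfl⟩
    exact ⟨atp1_subset_inSig, snd_kType_succ_subset_possibleSuccessors A k a⟩

theorem finite_possibleSuccessors (hU : SU.Finite) (hB : SB.Finite) (k : ℕ) :
    (possibleSuccessors SU SB k).Finite :=
  (finite_setOf_inSig hU hB).finite_subsets.prod (finite_realizedKTypes hU hB k)

/-- Global `k`-bisimilarity: every element of either structure is `k`-bisimilar to an element of
the other. -/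
def GlobalKBisim (A Bm : Str U B) (SU : Set U) (SB : Set B) (k : ℕ) : Prop :=
  (∀ a, ∃ b, KBisim A Bm SU SB k a b) ∧ (∀ b, ∃ a, KBisim A Bm SU SB k a b)

namespace GlobalKBisim

theorem refl (A : Str U B) (SU : Set U) (SB : Set B) (k : ℕ) : GlobalKBisim A A SU SB k :=
  ⟨fun a => ⟨a, .refl A SU SB k a⟩, fun a => ⟨a, .refl A SU SB k a⟩⟩

theorem symm {k : ℕ} (h : GlobalKBisim A Bm SU SB k) : GlobalKBisim Bm A SU SB k :=
  ⟨fun b => (h.2 b).imp fun _ => .symm, fun a => (h.1 a).imp fun _ => .symm⟩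

theorem mono {k l : ℕ} (hkl : k ≤ l) (h : GlobalKBisim A Bm SU SB l) :
    GlobalKBisim A Bm SU SB k :=
  ⟨fun a => (h.1 a).imp fun _ => .mono hkl, fun b => (h.2 b).imp fun _ => .mono hkl⟩

end GlobalKBisim

theorem globalKBisim_iff_range_kType_eq {k : ℕ} :
    GlobalKBisim A Bm SU SB k ↔
      Set.range (kType Bm SU SB k) = Set.range (kType A SU SB k) := by
  simp only [GlobalKBisim, kBisim_iff_kType_eq, Set.Subset.antisymm_iff (α := KType U B k),
    Set.range_subset_iff, Set.mem_range]
  rw [and_comm]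
  simp only [eq_comm]

end BoundedBisimilarity

/-! ### Invariance of GF² under bounded bisimilarity -/

section Invariance

variable {A Bm : Str U B} {SU : Set U} {SB : Set B} {σ : Var → A.Dom} {τ : Var → Bm.Dom}

/-- The assignments `σ` and `τ` satisfy the same Σ-atoms with variables in `S` and are pointwise
`k`-bisimilar on `S`. -/
structure KMatch (A Bm : Str U B) (SU : Set U) (SB : Set B) (k : ℕ) (S : Set Var)
    (σ : Var → A.Dom) (τ : Var → Bm.Dom) : Prop where
  sat_atom_iff : ∀ ⦃α : Fml U B⦄, α.IsAtom → α.free ⊆ S → α.upreds ⊆ SU → α.bpreds ⊆ SB →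
    (Sat A α σ ↔ Sat Bm α τ)
  kBisim : ∀ v ∈ S, KBisim A Bm SU SB k (σ v) (τ v)

namespace KMatch

theorem mono {k l : ℕ} {S T : Set Var} (h : KMatch A Bm SU SB l T σ τ) (hkl : k ≤ l)
    (hST : S ⊆ T) : KMatch A Bm SU SB k S σ τ where
  sat_atom_iff _ hα hfree := h.sat_atom_iff hα (hfree.trans hST)
  kBisim v hv := (h.kBisim v (hST hv)).mono hkl

theorem symm {k : ℕ} {S : Set Var} (h : KMatch A Bm SU SB k S σ τ) :
    KMatch Bm A SU SB k S τ σ where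
  sat_atom_iff _ hα hfree hu hb := (h.sat_atom_iff hα hfree hu hb).symm
  kBisim v hv := (h.kBisim v hv).symm

theorem of_kBisim {k : ℕ} {v : Var} (h : KBisim A Bm SU SB k (σ v) (τ v)) :
    KMatch A Bm SU SB k {v} σ τ where
  sat_atom_iff α hα hfree hu hb := by
    have hat := atp2_eq_iff.1 (atp1_eq_iff_atp2_eq.1 h.atp1_eq)
    cases α with
    | uatom P u =>
      obtain rfl : u = v := hfree rfl
      exact hat (.ua P .x) (hu rfl)
    | batom R u u' =>
      obtain rfl : u = v := hfree (.inl rfl)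
      obtain rfl : u' = u := hfree (.inr rfl)
      exact hat (.ba R .x .x) (hb rfl)
    | eqv u u' =>
      obtain rfl : u = v := hfree (.inl rfl)
      obtain rfl : u' = u := hfree (.inr rfl)
      simp only [Sat]
    | _ => exact hα.elim
  kBisim := by simpa using h

theorem of_atp2_eq {k : ℕ} {v w : Var} (hvw : v ≠ w)
    (hat : atp2 A SU SB (σ v) (σ w) = atp2 Bm SU SB (τ v) (τ w))
    (heq : σ w = σ v ↔ τ w = τ v) (hv : KBisim A Bm SU SB k (σ v) (τ v))
    (hw : KBisim A Bm SU SB k (σ w) (τ w)) (S : Set Var) : KMatch A Bm SU SB k S σ τ where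
  sat_atom_iff α hα _ hu hb := by
    rw [atp2_eq_iff] at hat
    cases α with
    | uatom P u =>
      obtain rfl | rfl := Var.eq_or_eq_of_ne hvw u
      · exact hat (.ua P .x) (hu rfl)
      · exact hat (.ua P .y) (hu rfl)
    | batom R u u' =>
      obtain rfl | rfl := Var.eq_or_eq_of_ne hvw u <;>
        obtain rfl | rfl := Var.eq_or_eq_of_ne hvw u'
      · exact hat (.ba R .x .x) (hb rfl)
      · exact hat (.ba R .x .y) (hb rfl)
      · exact hat (.ba R .y .x) (hb rfl)
      · exact hat (.ba R .y .y) (hb rfl)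
    | eqv u u' =>
      obtain rfl | rfl := Var.eq_or_eq_of_ne hvw u <;>
        obtain rfl | rfl := Var.eq_or_eq_of_ne hvw u' <;> simp only [Sat, heq]
      exact eq_comm.trans (heq.trans eq_comm)
    | _ => exact hα.elim
  kBisim u _ := by obtain rfl | rfl := Var.eq_or_eq_of_ne hvw u <;> assumption

end KMatch

theorem guarded2_of_sat_atom {α : Fml U B} (hα : α.IsAtom) (hb : α.bpreds ⊆ SB) {v w : Var}
    (hvw : v ≠ w) (hv : v ∈ α.free) (hw : w ∈ α.free) (hne : σ w ≠ σ v) (hsat : Sat A α σ) :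
    Guarded2 A SB (σ v) (σ w) := by
  cases α with
  | uatom P u => exact absurd (Eq.trans hv (Eq.symm hw)) hvw
  | batom R u u' =>
    refine ⟨R, hb rfl, ?_⟩
    obtain rfl | rfl := hv
    · obtain rfl : w = u' := hw.resolve_left hvw.symm
      exact Or.inl hsat
    · obtain rfl : w = u := hw.resolve_right hvw.symm
      exact Or.inr hsat
  | eqv u u' =>
    obtain rfl | rfl := hv
    · obtain rfl : w = u' := hw.resolve_left hvw.symm
      exact absurd (Eq.symm hsat) hne
    · obtain rfl : w = u := hw.resolve_right hvw.symm
      exact absurd hsat hne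
  | _ => exact hα.elim

theorem KMatch.exists_upd {k : ℕ} {α : Fml U B} {v : Var} (hα : α.IsAtom) (hv : v ∈ α.free)
    (hb : α.bpreds ⊆ SB) (hglob : GlobalKBisim A Bm SU SB k)
    (h : KMatch A Bm SU SB (k + 1) (α.free \ {v}) σ τ) {d : A.Dom} (hd : Sat A α (upd σ v d)) :
    ∃ e, KMatch A Bm SU SB k α.free (upd σ v d) (upd τ v e) := by
  obtain ⟨w, hwv⟩ := exists_ne v
  by_cases hw : w ∈ α.free
  · have hk := h.kBisim w ⟨hw, hwv⟩
    suffices ∃ e, atp2 A SU SB (σ w) d = atp2 Bm SU SB (τ w) e ∧ (d = σ w ↔ e = τ w) ∧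
        KBisim A Bm SU SB k d e by
      obtain ⟨e, hat, heq, hde⟩ := this
      exact ⟨e, .of_atp2_eq hwv (by simpa [hwv] using hat) (by simpa [hwv] using heq)
        (by simpa [hwv] using hk.of_succ) (by simpa using hde) _⟩
    by_cases hdw : d = σ w
    · subst hdw
      exact ⟨τ w, atp1_eq_iff_atp2_eq.1 hk.atp1_eq, by simp, hk.of_succ⟩
    · have hg : Guarded2 A SB (σ w) d := by
        simpa [hwv] using guarded2_of_sat_atom hα hb hwv hw hv (by simpa [hwv] using hdw) hd
      obtain ⟨e, hne, hat, hde⟩ := hk.2.1 d hdw hg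
      exact ⟨e, hat, iff_of_false hdw hne, hde⟩
  · obtain ⟨e, hde⟩ := hglob.1 d
    have hfree : α.free ⊆ {v} := fun u hu =>
      (Var.eq_or_eq_of_ne hwv u).resolve_left fun huw => hw (huw ▸ hu)
    exact ⟨e, (KMatch.of_kBisim (by simpa using hde)).mono le_rfl hfree⟩

theorem exists_sat_guard_and_imp {k : ℕ} {α : Fml U B} {v : Var} (hα : α.IsAtom)
    (hv : v ∈ α.free) (hu : α.upreds ⊆ SU) (hb : α.bpreds ⊆ SB)
    (hglob : GlobalKBisim A Bm SU SB k)
    {P : (Var → A.Dom) → Prop} {Q : (Var → Bm.Dom) → Prop}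
    (hPQ : ∀ σ' τ', KMatch A Bm SU SB k α.free σ' τ' → P σ' → Q τ')
    (h : KMatch A Bm SU SB (k + 1) (α.free \ {v}) σ τ)
    (hex : ∃ d, Sat A α (upd σ v d) ∧ P (upd σ v d)) :
    ∃ e, Sat Bm α (upd τ v e) ∧ Q (upd τ v e) := by
  obtain ⟨d, hd, hP⟩ := hex
  obtain ⟨e, he⟩ := h.exists_upd hα hv hb hglob hd
  exact ⟨e, (he.sat_atom_iff hα subset_rfl hu hb).1 hd, hPQ _ _ he hP⟩

theorem exists_sat_guard_and_iff {k : ℕ} {α : Fml U B} {v : Var} (hα : α.IsAtom)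
    (hv : v ∈ α.free) (hu : α.upreds ⊆ SU) (hb : α.bpreds ⊆ SB)
    (hglob : GlobalKBisim A Bm SU SB k)
    {P : (Var → A.Dom) → Prop} {Q : (Var → Bm.Dom) → Prop}
    (hPQ : ∀ σ' τ', KMatch A Bm SU SB k α.free σ' τ' → (P σ' ↔ Q τ'))
    (h : KMatch A Bm SU SB (k + 1) (α.free \ {v}) σ τ) :
    (∃ d, Sat A α (upd σ v d) ∧ P (upd σ v d)) ↔ ∃ e, Sat Bm α (upd τ v e) ∧ Q (upd τ v e) :=
  ⟨exists_sat_guard_and_imp hα hv hu hb hglob (fun _ _ hm => (hPQ _ _ hm).1) h,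
    exists_sat_guard_and_imp hα hv hu hb hglob.symm (fun _ _ hm => (hPQ _ _ hm.symm).2) h.symm⟩

theorem Fml.IsAtom.free_nonempty {α : Fml U B} (hα : α.IsAtom) : α.free.Nonempty := by
  cases α with
  | uatom P v => exact ⟨v, rfl⟩
  | batom R v w => exact ⟨v, .inl rfl⟩
  | eqv v w => exact ⟨v, .inl rfl⟩
  | _ => exact hα.elim

theorem sat_all_impl_iff {v : Var} {α χ : Fml U B} :
    Sat A (.all v (.impl α χ)) σ ↔ ¬ ∃ d, Sat A α (upd σ v d) ∧ ¬ Sat A χ (upd σ v d) := by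
  simp only [Sat, not_exists, not_and, not_not]

theorem IsGF2.sat_iff_of_kMatch {φ : Fml U B} (hφ : IsGF2 φ)
    (hglob : GlobalKBisim A Bm SU SB φ.gdepth) (hu : φ.upreds ⊆ SU) (hb : φ.bpreds ⊆ SB)
    (h : KMatch A Bm SU SB φ.gdepth φ.free σ τ) : Sat A φ σ ↔ Sat Bm φ τ := by
  induction hφ generalizing σ τ with
  | uatom | batom | eqv => exact h.sat_atom_iff trivial subset_rfl hu hb
  | fls => rfl
  | neg _ ih => exact not_congr (ih hglob hu hb h)
  | conj _ _ ih₁ ih₂ | disj _ _ ih₁ ih₂ | impl _ _ ih₁ ih₂ =>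
    simp only [Fml.upreds, Fml.bpreds, Fml.gdepth, Set.union_subset_iff] at hu hb hglob h
    have h₁ := ih₁ (hglob.mono (le_max_left _ _)) hu.1 hb.1
      (h.mono (le_max_left _ _) Set.subset_union_left)
    have h₂ := ih₂ (hglob.mono (le_max_right _ _)) hu.2 hb.2
      (h.mono (le_max_right _ _) Set.subset_union_right)
    simp only [Sat, h₁, h₂]
  | @allG v α χ hα _ hfree ih | @exG v α χ hα _ hfree ih =>
    simp only [Fml.upreds, Fml.bpreds, Fml.gdepth, Set.union_subset_iff] at hu hb hglob h hfree
    have hχ : χ.gdepth ≤ max α.gdepth χ.gdepth := le_max_right _ _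
    have hglobχ := hglob.mono (Nat.le_succ_of_le hχ)
    have hguard : KMatch A Bm SU SB (χ.gdepth + 1) (α.free \ {v}) σ τ :=
      h.mono (Nat.succ_le_succ hχ) (Set.sdiff_subset_sdiff_left Set.subset_union_left)
    have hbody (σ' : Var → A.Dom) (τ' : Var → Bm.Dom)
        (hm : KMatch A Bm SU SB χ.gdepth α.free σ' τ') : Sat A χ σ' ↔ Sat Bm χ τ' :=
      ih hglobχ hu.2 hb.2 (hm.mono le_rfl hfree.1)
    have hv : v ∈ α.free := hfree.2 rfl
    first
    | exact exists_sat_guard_and_iff hα hv hu.1 hb.1 hglobχ hbody hguard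
    | rw [sat_all_impl_iff, sat_all_impl_iff]
      exact not_congr (exists_sat_guard_and_iff hα hv hu.1 hb.1 hglobχ
        (fun σ' τ' hm => not_congr (hbody σ' τ' hm)) hguard)

theorem IsGF2Sentence.satS_iff_of_globalKBisim {ψ : Fml U B} (hψ : IsGF2Sentence SU SB ψ) {k : ℕ}
    (hk : ψ.gdepth ≤ k) (h : GlobalKBisim A Bm SU SB k) : SatS A ψ ↔ SatS Bm ψ := by
  obtain ⟨hgf, hsent, hu, hb⟩ := hψ
  have hsat (σ : Var → A.Dom) (τ : Var → Bm.Dom) : Sat A ψ σ ↔ Sat Bm ψ τ := by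
    have hfree : ψ.free = ∅ := hsent
    refine hgf.sat_iff_of_kMatch (h.mono hk) hu hb ⟨fun α hα hα' => ?_, by simp [hfree]⟩
    obtain ⟨v, hv⟩ := hα.free_nonempty
    exact absurd (hfree ▸ hα' hv) (Set.notMem_empty v)
  obtain ⟨a⟩ := A.nonempty
  obtain ⟨b⟩ := Bm.nonempty
  exact ⟨fun hA τ => (hsat (fun _ => a) τ).1 (hA _), fun hB σ => (hsat σ fun _ => b).2 (hB _)⟩

end Invariance

/-! ### Definability of types -/

section Definability

variable {SU : Set U} {SB : Set B} {S T : Set Var} {Q Q' : (A : Str U B) → (Var → A.Dom) → Prop}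

/-- The property `Q` of assignments is expressed, uniformly in all structures, by a GF²(Σ)-formula
with free variables in `S`. -/
def GF2Definable (SU : Set U) (SB : Set B) (S : Set Var)
    (Q : (A : Str U B) → (Var → A.Dom) → Prop) : Prop :=
  ∃ χ : Fml U B, IsGF2 χ ∧ χ.free ⊆ S ∧ χ.upreds ⊆ SU ∧ χ.bpreds ⊆ SB ∧
    ∀ A σ, Sat A χ σ ↔ Q A σ

namespace GF2Definable

theorem congr (hQ : GF2Definable SU SB S Q) (h : ∀ A σ, Q' A σ ↔ Q A σ) :
    GF2Definable SU SB S Q' := by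
  obtain ⟨χ, hχ, hfree, hu, hb, hsat⟩ := hQ
  exact ⟨χ, hχ, hfree, hu, hb, fun A σ => (hsat A σ).trans (h A σ).symm⟩

theorem mono (hQ : GF2Definable SU SB S Q) (hST : S ⊆ T) : GF2Definable SU SB T Q := by
  obtain ⟨χ, hχ, hfree, hrest⟩ := hQ
  exact ⟨χ, hχ, hfree.trans hST, hrest⟩

theorem not (hQ : GF2Definable SU SB S Q) : GF2Definable SU SB S fun A σ => ¬ Q A σ := by
  obtain ⟨χ, hχ, hfree, hu, hb, hsat⟩ := hQ
  exact ⟨.neg χ, .neg hχ, hfree, hu, hb, fun A σ => not_congr (hsat A σ)⟩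

theorem and (hQ : GF2Definable SU SB S Q) (hQ' : GF2Definable SU SB S Q') :
    GF2Definable SU SB S fun A σ => Q A σ ∧ Q' A σ := by
  obtain ⟨χ, hχ, hfree, hu, hb, hsat⟩ := hQ
  obtain ⟨χ', hχ', hfree', hu', hb', hsat'⟩ := hQ'
  exact ⟨.conj χ χ', .conj hχ hχ', Set.union_subset hfree hfree', Set.union_subset hu hu',
    Set.union_subset hb hb', fun A σ => and_congr (hsat A σ) (hsat' A σ)⟩

theorem or (hQ : GF2Definable SU SB S Q) (hQ' : GF2Definable SU SB S Q') :
    GF2Definable SU SB S fun A σ => Q A σ ∨ Q' A σ :=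
  (hQ.not.and hQ'.not).not.congr fun _ _ => or_iff_not_and_not

theorem const (p : Prop) : GF2Definable SU SB S fun _ _ => p := by
  have hfls : GF2Definable SU SB S fun _ _ => False :=
    ⟨.fls, .fls, Set.empty_subset _, Set.empty_subset _, Set.empty_subset _, fun _ _ => Iff.rfl⟩
  by_cases hp : p
  · exact hfls.not.congr fun _ _ => by simp [hp]
  · exact hfls.congr fun _ _ => by simp [hp]

theorem iff_const (hQ : GF2Definable SU SB S Q) (p : Prop) :
    GF2Definable SU SB S fun A σ => Q A σ ↔ p := by
  by_cases hp : p
  · exact hQ.congr fun _ _ => iff_true_right hp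
  · exact hQ.not.congr fun _ _ => iff_false_right hp

theorem ball {β : Type} {F : Set β} (hF : F.Finite)
    {Q : β → (A : Str U B) → (Var → A.Dom) → Prop} (hQ : ∀ q ∈ F, GF2Definable SU SB S (Q q)) :
    GF2Definable SU SB S fun A σ => ∀ q ∈ F, Q q A σ := by
  induction F, hF using Set.Finite.induction_on with
  | empty => exact (const True).congr fun _ _ => by simp
  | insert _ _ ih =>
    rw [Set.forall_mem_insert] at hQ
    exact (hQ.1.and (ih hQ.2)).congr fun _ _ => Set.forall_mem_insert

theorem bex {β : Type} {F : Set β} (hF : F.Finite)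
    {Q : β → (A : Str U B) → (Var → A.Dom) → Prop} (hQ : ∀ q ∈ F, GF2Definable SU SB S (Q q)) :
    GF2Definable SU SB S fun A σ => ∃ q ∈ F, Q q A σ :=
  (ball hF fun q hq => (hQ q hq).not).not.congr fun _ _ => by simp

theorem set_eq {β : Type} {F : Set β} (hF : F.Finite) {s : (A : Str U B) → (Var → A.Dom) → Set β}
    (hs : ∀ A σ, s A σ ⊆ F) (hmem : ∀ q ∈ F, GF2Definable SU SB S fun A σ => q ∈ s A σ)
    (t : Set β) : GF2Definable SU SB S fun A σ => s A σ = t := by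
  refine ((const (t ⊆ F)).and (ball hF fun q hq => (hmem q hq).iff_const (q ∈ t))).congr
    fun A σ => ⟨?_, fun ⟨ht, hiff⟩ => ?_⟩
  · rintro rfl
    exact ⟨hs A σ, fun _ _ => Iff.rfl⟩
  · exact Set.ext fun q =>
      ⟨fun hq => (hiff q (hs A σ hq)).1 hq, fun hq => (hiff q (ht hq)).2 hq⟩

theorem eqv (v w : Var) : GF2Definable SU SB {v, w} fun _ σ => σ v = σ w :=
  ⟨.eqv v w, .eqv v w, subset_rfl, Set.empty_subset _, Set.empty_subset _, fun _ _ => Iff.rfl⟩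

theorem atom2_holds {α : Atom2 U B} (hα : α.inSig SU SB) (v w : Var) :
    GF2Definable SU SB {v, w} fun A σ => α.holds A (σ v) (σ w) := by
  have hvar (u : Var) : vval v w u ∈ ({v, w} : Set Var) := by cases u <;> simp [vval]
  have hval {D : Type} (σ : Var → D) (u : Var) : σ (vval v w u) = vval (σ v) (σ w) u := by
    cases u <;> rfl
  cases α with
  | ua P u =>
    exact ⟨.uatom P (vval v w u), .uatom _ _, Set.singleton_subset_iff.2 (hvar u),
      Set.singleton_subset_iff.2 hα, Set.empty_subset _,
      fun A σ => by simp only [Sat, Atom2.holds, hval]⟩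
  | ba R u u' =>
    exact ⟨.batom R (vval v w u) (vval v w u'), .batom _ _ _,
      Set.pair_subset (hvar u) (hvar u'), Set.empty_subset _, Set.singleton_subset_iff.2 hα,
      fun A σ => by simp only [Sat, Atom2.holds, hval]⟩

theorem exists_sat_guard_and {α : Fml U B} (hα : α.IsAtom) {w : Var} (hw : w ∈ α.free)
    (hu : α.upreds ⊆ SU) (hb : α.bpreds ⊆ SB) (hQ : GF2Definable SU SB α.free Q) :
    GF2Definable SU SB (α.free \ {w}) fun A σ =>
      ∃ d, Sat A α (upd σ w d) ∧ Q A (upd σ w d) := by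
  obtain ⟨χ, hχ, hfree, hχu, hχb, hsat⟩ := hQ
  refine ⟨.ex w (.conj α χ), .exG hα hχ (Set.union_subset hfree (Set.singleton_subset_iff.2 hw)),
    Set.sdiff_subset_sdiff_left (Set.union_subset subset_rfl hfree), Set.union_subset hu hχu,
    Set.union_subset hb hχb, fun A σ => ?_⟩
  simp only [Sat, hsat]

theorem exists_upd {w : Var} (hQ : GF2Definable SU SB {w} Q) :
    GF2Definable SU SB ∅ fun A σ => ∃ d, Q A (upd σ w d) := by
  have hfree : (Fml.eqv w w : Fml U B).free = {w} := Set.pair_eq_singleton w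
  refine ((exists_sat_guard_and (α := .eqv w w) trivial (w := w) (.inl rfl) (Set.empty_subset _)
    (Set.empty_subset _) (hQ.mono hfree.ge)).mono (by simp [hfree])).congr fun A σ => ?_
  simp only [Sat, true_and]

theorem exists_guarded2_and (hB : SB.Finite) {v w : Var} (hvw : v ≠ w)
    (hQ : GF2Definable SU SB {v, w} Q) :
    GF2Definable SU SB {v} fun A σ => ∃ d, Guarded2 A SB (σ v) d ∧ Q A (upd σ w d) := by
  have hguard {α : Fml U B} (hα : α.IsAtom) (hfree : α.free = {v, w}) (hu : α.upreds ⊆ SU)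
      (hb : α.bpreds ⊆ SB) : GF2Definable SU SB {v} fun A σ =>
        ∃ d, Sat A α (upd σ w d) ∧ Q A (upd σ w d) :=
    (exists_sat_guard_and hα (by simp [hfree]) hu hb (hfree ▸ hQ)).mono (by simp [hfree])
  refine (bex hB fun R hR =>
    (hguard (α := .batom R v w) trivial rfl (Set.empty_subset _)
      (Set.singleton_subset_iff.2 hR)).or
    (hguard (α := .batom R w v) trivial (Set.pair_comm w v) (Set.empty_subset _)
      (Set.singleton_subset_iff.2 hR))).congr fun A σ => ?_
  simp only [Guarded2, Sat, upd_self, upd_of_ne σ hvw, ← exists_or, ← or_and_right]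
  constructor
  · rintro ⟨d, ⟨R, hR, hd⟩, hQd⟩
    exact ⟨R, hR, d, hd, hQd⟩
  · rintro ⟨R, hR, d, hd, hQd⟩
    exact ⟨d, ⟨R, hR, hd⟩, hQd⟩

theorem atp1_eq (hU : SU.Finite) (hB : SB.Finite) (v : Var) (τ : Set (Atom2 U B)) :
    GF2Definable SU SB {v} fun A σ => atp1 A SU SB (σ v) = τ := by
  refine set_eq (finite_setOf_inSig hU hB) (fun _ _ => atp1_subset_inSig) (fun α hα => ?_) τ
  have hholds := (atom2_holds hα v v).mono (Set.pair_eq_singleton v).le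
  exact (const α.onlyX).and ((const (α.inSig SU SB)).and hholds)

theorem atp2_eq (hU : SU.Finite) (hB : SB.Finite) (v w : Var) (τ : Set (Atom2 U B)) :
    GF2Definable SU SB {v, w} fun A σ => atp2 A SU SB (σ v) (σ w) = τ :=
  set_eq (finite_setOf_inSig hU hB) (fun _ _ => atp2_subset_inSig)
    (fun α hα => (const (α.inSig SU SB)).and (atom2_holds hα v w)) τ

theorem kType_eq (hU : SU.Finite) (hB : SB.Finite) (v : Var) {k : ℕ} (t : KType U B k) :
    GF2Definable SU SB {v} fun A σ => kType A SU SB k (σ v) = t := by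
  induction k generalizing v with
  | zero => exact atp1_eq hU hB v t
  | succ k ih =>
    refine ((atp1_eq hU hB v t.1).and (set_eq (finite_possibleSuccessors hU hB k)
      (fun A σ => snd_kType_succ_subset_possibleSuccessors A k (σ v)) (fun q _ => ?_) t.2)).congr
      fun A σ => kType_succ_eq_iff
    obtain ⟨w, hwv⟩ := exists_ne v
    have hmatch : GF2Definable SU SB {v, w} fun A σ =>
        σ w ≠ σ v ∧ atp2 A SU SB (σ v) (σ w) = q.1 ∧ kType A SU SB k (σ w) = q.2 :=
      ((eqv w v).mono (Set.pair_comm w v).le).not.and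
        ((atp2_eq hU hB v w q.1).and ((ih w q.2).mono (by simp)))
    refine (hmatch.exists_guarded2_and hB hwv.symm).congr fun A σ => ?_
    simp only [upd_self, upd_of_ne σ hwv.symm]
    constructor
    · rintro ⟨d, ⟨hne, hg⟩, rfl⟩
      exact ⟨d, hg, hne, rfl, rfl⟩
    · rintro ⟨d, hg, hne, hτ, hd⟩
      exact ⟨d, ⟨hne, hg⟩, Prod.ext hτ hd⟩

theorem globalKBisim (hU : SU.Finite) (hB : SB.Finite) (A : Str U B) (k : ℕ) :
    GF2Definable SU SB ∅ fun Bm _ => GlobalKBisim A Bm SU SB k := by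
  have hmem (t : KType U B k) :
      GF2Definable SU SB ∅ fun Bm _ => t ∈ Set.range (kType Bm SU SB k) :=
    (kType_eq hU hB .x t).exists_upd.congr fun Bm σ => by simp only [upd_self, Set.mem_range]
  refine (set_eq (finite_realizedKTypes hU hB k) ?_ (fun t _ => hmem t) _).congr fun Bm _ =>
    globalKBisim_iff_range_kType_eq
  rintro Bm _ _ ⟨b, rfl⟩
  exact ⟨Bm, b, rfl⟩

end GF2Definable

end Definability

/-! ### Ultraproducts -/

section Ultraproduct

/-- The ultraproduct of a family of structures. Atoms are evaluated on chosen representatives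
(`ultraproduct.coord`) of the classes, so that no quotient lifting is needed. -/
def ultraproduct {ι : Type} (F : Ultrafilter ι) (Bs : ι → Str U B) : Str U B where
  Dom := (F : Filter ι).Product fun i => (Bs i).Dom
  nonempty := ⟨Quotient.mk _ fun i => (Bs i).nonempty.some⟩
  u P d := ∀ᶠ i in F, (Bs i).u P (d.out i)
  b R d e := ∀ᶠ i in F, (Bs i).b R (d.out i) (e.out i)

namespace ultraproduct

variable {ι : Type} {F : Ultrafilter ι} {Bs : ι → Str U B}

/-- The `i`-th coordinate of the chosen representative of an element of the ultraproduct. -/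
noncomputable def coord (d : (ultraproduct F Bs).Dom) (i : ι) : (Bs i).Dom :=
  Quotient.out d i

theorem eq_iff {d e : (ultraproduct F Bs).Dom} : d = e ↔ ∀ᶠ i in F, coord d i = coord e i :=
  Quotient.out_equiv_out.symm

theorem exists_coord_eventually_eq (g : ∀ i, (Bs i).Dom) :
    ∃ d : (ultraproduct F Bs).Dom, ∀ᶠ i in F, coord d i = g i :=
  ⟨Quotient.mk _ g, Quotient.mk_out (s := Filter.productSetoid _ _) g⟩

theorem exists_eventually_iff {P : ∀ i, (Bs i).Dom → Prop} :
    (∃ d : (ultraproduct F Bs).Dom, ∀ᶠ i in F, P i (coord d i)) ↔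
      ∀ᶠ i in F, ∃ d, P i d := by
  constructor
  · rintro ⟨d, hd⟩
    exact hd.mono fun i hi => ⟨_, hi⟩
  · intro h
    have hwitness (i : ι) : ∃ d, (∃ d', P i d') → P i d := by
      obtain ⟨d₀⟩ := (Bs i).nonempty
      by_cases hex : ∃ d', P i d'
      · exact hex.imp fun d hd _ => hd
      · exact ⟨d₀, fun h => absurd h hex⟩
    choose g hg using hwitness
    obtain ⟨d, hd⟩ := exists_coord_eventually_eq (F := F) g
    exact ⟨d, (h.and hd).mono fun i ⟨hex, heq⟩ => heq ▸ hg i hex⟩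

theorem forall_eventually_iff {P : ∀ i, (Bs i).Dom → Prop} :
    (∀ d : (ultraproduct F Bs).Dom, ∀ᶠ i in F, P i (coord d i)) ↔
      ∀ᶠ i in F, ∀ d, P i d := by
  rw [← not_iff_not, ← Ultrafilter.eventually_not]
  simp only [not_forall, ← Ultrafilter.eventually_not]
  exact exists_eventually_iff (P := fun i d => ¬ P i d)

theorem coord_upd (σ : Var → (ultraproduct F Bs).Dom) (v : Var) (d : (ultraproduct F Bs).Dom)
    (i : ι) : (fun w => coord (upd σ v d w) i) = upd (fun w => coord (σ w) i) v (coord d i) := by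
  funext w
  by_cases h : w = v
  · subst h
    simp
  · simp [h]

theorem sat_iff {φ : Fml U B} {σ : Var → (ultraproduct F Bs).Dom} :
    Sat (ultraproduct F Bs) φ σ ↔ ∀ᶠ i in F, Sat (Bs i) φ fun v => coord (σ v) i := by
  induction φ generalizing σ with
  | uatom | batom => rfl
  | eqv => exact eq_iff
  | fls => simp only [Sat, Filter.eventually_const]
  | neg φ ih => simp only [Sat, ih, Ultrafilter.eventually_not]
  | conj φ ψ ihφ ihψ => simp only [Sat, ihφ, ihψ, Filter.eventually_and]
  | disj φ ψ ihφ ihψ => simp only [Sat, ihφ, ihψ, Ultrafilter.eventually_or]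
  | impl φ ψ ihφ ihψ => simp only [Sat, ihφ, ihψ, Ultrafilter.eventually_imp]
  | all v φ ih => simp only [Sat, ih, coord_upd, ← forall_eventually_iff]
  | ex v φ ih => simp only [Sat, ih, coord_upd, ← exists_eventually_iff]

theorem satS_of_eventually {φ : Fml U B} (h : ∀ᶠ i in F, SatS (Bs i) φ) :
    SatS (ultraproduct F Bs) φ :=
  fun _ => sat_iff.2 (h.mono fun _ hi => hi _)

theorem gf2Definable_iff {SU : Set U} {SB : Set B} {S : Set Var}
    {Q : (A : Str U B) → (Var → A.Dom) → Prop} (hQ : GF2Definable SU SB S Q)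
    {σ : Var → (ultraproduct F Bs).Dom} :
    Q (ultraproduct F Bs) σ ↔ ∀ᶠ i in F, Q (Bs i) fun v => coord (σ v) i := by
  obtain ⟨χ, -, -, -, -, hsat⟩ := hQ
  simp only [← hsat, sat_iff]

end ultraproduct

/-- Every countable set of formulas in one variable `v`, with the other variable as a parameter,
is realised as soon as its finite subsets are. -/
def CountablySaturated (Bm : Str U B) : Prop :=
  ∀ (χ : ℕ → Fml U B) (σ : Var → Bm.Dom) (v : Var),
    (∀ k, ∃ d, ∀ j ≤ k, Sat Bm (χ j) (upd σ v d)) → ∃ d, ∀ j, Sat Bm (χ j) (upd σ v d)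

/-- A diagonal argument: `f n` satisfies the strongest of the first `n` conditions that is
satisfiable at `n`. -/
theorem exists_forall_eventually_of_forall_eventually_exists {α : ℕ → Type}
    [∀ n, Nonempty (α n)] {l : Filter ℕ} (hl : l ≤ Filter.atTop) {P : ∀ n, ℕ → α n → Prop}
    (hP : ∀ {n j k d}, j ≤ k → P n k d → P n j d) (h : ∀ k, ∀ᶠ n in l, ∃ d, P n k d) :
    ∃ f : ∀ n, α n, ∀ k, ∀ᶠ n in l, P n k (f n) := by
  classical
  have hstrongest (n : ℕ) : ∃ d, ∀ k ≤ n, (∃ d', P n k d') → P n k d := by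
    by_cases hn : ∃ k ≤ n, ∃ d', P n k d'
    · obtain ⟨k, hk, hPk⟩ := hn
      obtain ⟨d, hd⟩ := Nat.findGreatest_spec (P := fun k => ∃ d', P n k d') hk hPk
      exact ⟨d, fun j hj hPj => hP (Nat.le_findGreatest hj hPj) hd⟩
    · exact ⟨Classical.arbitrary _, fun k hk hPk => absurd ⟨k, hk, hPk⟩ hn⟩
  choose f hf using hstrongest
  refine ⟨f, fun k => ?_⟩
  filter_upwards [h k, hl (Filter.eventually_ge_atTop k)] with n hex hkn
  exact hf n k hkn hex

theorem ultraproduct.countablySaturated {F : Ultrafilter ℕ} (hF : (F : Filter ℕ) ≤ Filter.atTop)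
    (Bs : ℕ → Str U B) : CountablySaturated (ultraproduct F Bs) := by
  intro χ σ v h
  have hne (n : ℕ) : Nonempty (Bs n).Dom := (Bs n).nonempty
  let P (n k : ℕ) (d : (Bs n).Dom) : Prop :=
    ∀ j ≤ k, Sat (Bs n) (χ j) (upd (fun w => coord (σ w) n) v d)
  have hP (k : ℕ) : ∀ᶠ n in (F : Filter ℕ), ∃ d, P n k d := by
    obtain ⟨d, hd⟩ := h k
    simp only [sat_iff, coord_upd] at hd
    exact ((Set.finite_Iic k).eventually_all.2 hd).mono fun n hn => ⟨_, hn⟩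
  obtain ⟨f, hf⟩ := exists_forall_eventually_of_forall_eventually_exists hF
    (fun hjk hd i hij => hd i (hij.trans hjk)) hP
  obtain ⟨d, hd⟩ := exists_coord_eventually_eq (F := F) f
  refine ⟨d, fun j => sat_iff.2 ?_⟩
  filter_upwards [hf j, hd] with n hn heq
  rw [coord_upd, heq]
  exact hn j le_rfl

theorem CountablySaturated.exists_forall_gf2Definable {Bm : Str U B} (hBm : CountablySaturated Bm)
    {SU : Set U} {SB : Set B} {S : Set Var} {Q : ℕ → (A : Str U B) → (Var → A.Dom) → Prop}
    (hQ : ∀ k, GF2Definable SU SB S (Q k)) {σ : Var → Bm.Dom} {v : Var}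
    (h : ∀ k, ∃ d, ∀ j ≤ k, Q j Bm (upd σ v d)) : ∃ d, ∀ k, Q k Bm (upd σ v d) := by
  choose χ _ _ _ _ hsat using hQ
  simp only [← hsat] at h ⊢
  exact hBm χ σ v h

end Ultraproduct

/-! ### From bounded bisimilarity to bisimilarity -/

section HennessyMilner

variable {A Bm : Str U B} {SU : Set U} {SB : Set B} {a : A.Dom} {b : Bm.Dom}

theorem CountablySaturated.forth_of_forall_kBisim (hBm : CountablySaturated Bm) (hU : SU.Finite)
    (hB : SB.Finite) (h : ∀ k, KBisim A Bm SU SB k a b) {a' : A.Dom} (hne : a' ≠ a)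
    (hg : Guarded2 A SB a a') :
    ∃ b', b' ≠ b ∧ atp2 A SU SB a a' = atp2 Bm SU SB b b' ∧
      ∀ k, KBisim A Bm SU SB k a' b' := by
  have hdef (k : ℕ) : GF2Definable SU SB Set.univ fun C τ =>
      τ .y ≠ τ .x ∧ atp2 C SU SB (τ .x) (τ .y) = atp2 A SU SB a a' ∧
        kType C SU SB k (τ .y) = kType A SU SB k a' :=
    ((GF2Definable.eqv .y .x).not.mono (Set.subset_univ _)).and
      (((GF2Definable.atp2_eq hU hB .x .y _).mono (Set.subset_univ _)).and
        ((GF2Definable.kType_eq hU hB .y _).mono (Set.subset_univ _)))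
  obtain ⟨b', hb'⟩ := hBm.exists_forall_gf2Definable hdef (σ := fun _ => b) (v := .y) fun k => by
    obtain ⟨b', hne', hat, hk⟩ := (kBisim_succ_iff.1 (h (k + 1))).2.1 a' hne hg
    exact ⟨b', fun j hj => ⟨hne', hat.symm, (kBisim_iff_kType_eq.1 (hk.mono hj)).symm⟩⟩
  exact ⟨b', (hb' 0).1, (hb' 0).2.1.symm, fun k => kBisim_iff_kType_eq.2 (hb' k).2.2.symm⟩

theorem FiniteOutdeg.back_of_forall_kBisim (hA : FiniteOutdeg A)
    (h : ∀ k, KBisim A Bm SU SB k a b) {b' : Bm.Dom} (hne : b' ≠ b) (hg : Guarded2 Bm SB b b') :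
    ∃ a', a' ≠ a ∧ atp2 A SU SB a a' = atp2 Bm SU SB b b' ∧
      ∀ k, KBisim A Bm SU SB k a' b' := by
  have hcandidates (k : ℕ) : ∃ a' ∈ neighbors A SB a,
      atp2 A SU SB a a' = atp2 Bm SU SB b b' ∧ KBisim A Bm SU SB k a' b' := by
    obtain ⟨a', hne', hat, hk⟩ := (kBisim_succ_iff.1 (h (k + 1))).2.2 b' hne hg
    exact ⟨a', ⟨hne', hg.of_atp2_eq hat.symm⟩, hat, hk⟩
  obtain ⟨a', ⟨hne', -⟩, hfreq⟩ := hA.finite_neighbors.frequently_exists.1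
    (Filter.Frequently.of_forall (f := Filter.atTop) hcandidates)
  obtain ⟨-, hat, -⟩ := hfreq.exists
  refine ⟨a', hne', hat, fun k => ?_⟩
  obtain ⟨l, hkl, -, hl⟩ := Filter.frequently_atTop.1 hfreq k
  exact hl.mono hkl

theorem isBisim_forall_kBisim (hU : SU.Finite) (hB : SB.Finite) (hA : FiniteOutdeg A)
    (hBm : CountablySaturated Bm) :
    IsBisim A Bm SU SB fun a b => ∀ k, KBisim A Bm SU SB k a b where
  atom_eq h := (h 0).atp1_eq
  forth h _ hne hg := hBm.forth_of_forall_kBisim hU hB h hne hg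
  back h _ hne hg := hA.back_of_forall_kBisim h hne hg

theorem CountablySaturated.exists_bisim (hBm : CountablySaturated Bm) (hU : SU.Finite)
    (hB : SB.Finite) (hA : FiniteOutdeg A) (h : ∀ k, ∃ b, KBisim A Bm SU SB k a b) :
    ∃ b, Bisim A Bm SU SB a b := by
  obtain ⟨b₀⟩ := Bm.nonempty
  obtain ⟨b, hb⟩ := hBm.exists_forall_gf2Definable
    (fun k => GF2Definable.kType_eq hU hB .x (kType A SU SB k a)) (σ := fun _ => b₀) (v := .x)
    fun k => (h k).imp fun b hk j hj => (kBisim_iff_kType_eq.1 (hk.mono hj)).symm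
  exact ⟨b, _, isBisim_forall_kBisim hU hB hA hBm, fun k => kBisim_iff_kType_eq.2 (hb k).symm⟩

end HennessyMilner

section Entailment

variable {A : Str U B} {SU : Set U} {SB : Set B} {φ₁ φ₂ : Fml U B}

theorem GF2Entails.exists_globalKBisim (h : GF2Entails SU SB φ₁ φ₂) (hU : SU.Finite)
    (hB : SB.Finite) (hA : SatS A φ₁) (k : ℕ) :
    ∃ Bm : Str U B, SatS Bm φ₂ ∧ GlobalKBisim A Bm SU SB k := by
  by_contra! hnone
  obtain ⟨χ, hχ, hfree, hu, hb, hsat⟩ := (GF2Definable.globalKBisim hU hB A k).not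
  have hcons : Entails φ₂ χ := fun Bm hBm σ => (hsat Bm σ).2 (hnone Bm hBm)
  have hAχ := h χ ⟨hχ, Set.subset_empty_iff.1 hfree, hu, hb⟩ hcons A hA
  obtain ⟨a⟩ := A.nonempty
  exact (hsat A fun _ => a).1 (hAχ _) (.refl A SU SB k)

theorem GF2Entails.exists_countablySaturated (h : GF2Entails SU SB φ₁ φ₂) (hU : SU.Finite)
    (hB : SB.Finite) (hA : SatS A φ₁) :
    ∃ Bm : Str U B, SatS Bm φ₂ ∧ CountablySaturated Bm ∧ ∀ k, GlobalKBisim A Bm SU SB k := by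
  choose Bs hBs hglob using h.exists_globalKBisim hU hB hA
  let F := Filter.hyperfilter ℕ
  refine ⟨ultraproduct F Bs, ultraproduct.satS_of_eventually (.of_forall hBs),
    ultraproduct.countablySaturated Nat.hyperfilter_le_atTop Bs, fun k => ?_⟩
  obtain ⟨d⟩ := (ultraproduct F Bs).nonempty
  refine (ultraproduct.gf2Definable_iff (GF2Definable.globalKBisim hU hB A k)
    (σ := fun _ => d)).2 ?_
  filter_upwards [Nat.hyperfilter_le_atTop (Filter.eventually_ge_atTop k)] with n hkn
  exact (hglob n).mono hkn

end Entailment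

/-! ### Unravelling to finite outdegree -/

section Unravelling

variable {A : Str U B} {W : A.Dom → Set A.Dom}

/-- In the tree unravelling, `q` is a child of `p` if it extends the history of `p` by one step to
an element of `W`. A point is a pair of a current element and the list of its predecessors, the most
recent one first; lists that are not `W`-paths are allowed, they merely add further trees. -/
def IsChild (W : A.Dom → Set A.Dom) (p q : A.Dom × List A.Dom) : Prop :=
  q.1 ∈ W p.1 ∧ q.2 = p.1 :: p.2

/-- Reflexive adjacency in the tree unravelling. -/
def TreeAdj (W : A.Dom → Set A.Dom) (p q : A.Dom × List A.Dom) : Prop :=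
  p = q ∨ IsChild W p q ∨ IsChild W q p

theorem TreeAdj.refl (p : A.Dom × List A.Dom) : TreeAdj W p p := .inl rfl

theorem TreeAdj.symm {p q : A.Dom × List A.Dom} (h : TreeAdj W p q) : TreeAdj W q p :=
  h.imp Eq.symm Or.symm

/-- The unravelling of `A` along the successors selected by `W`: the edges of `A` are kept between
adjacent points of the tree only. -/
def unravel (A : Str U B) (W : A.Dom → Set A.Dom) : Str U B where
  Dom := A.Dom × List A.Dom
  nonempty := A.nonempty.map fun a => (a, [])
  u P p := A.u P p.1
  b R p q := A.b R p.1 q.1 ∧ TreeAdj W p q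

variable {SU : Set U} {SB : Set B} {p q : (unravel A W).Dom}

theorem atp2_unravel_of_treeAdj (h : TreeAdj W p q) :
    atp2 (unravel A W) SU SB p q = atp2 A SU SB p.1 q.1 := by
  refine atp2_eq_iff.2 fun α _ => ?_
  cases α with
  | ua P v => cases v <;> rfl
  | ba R v w =>
    cases v <;> cases w <;> refine and_iff_left ?_
    exacts [.refl p, h, h.symm, .refl q]

theorem atp1_unravel : atp1 (unravel A W) SU SB p = atp1 A SU SB p.1 :=
  atp1_eq_iff_atp2_eq.2 (atp2_unravel_of_treeAdj (.refl p))

theorem Guarded2.treeAdj (h : Guarded2 (unravel A W) SB p q) : TreeAdj W p q := by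
  obtain ⟨R, _, h | h⟩ := h
  exacts [h.2, h.2.symm]

theorem finiteOutdeg_unravel (hW : ∀ a, (W a).Finite) : FiniteOutdeg (unravel A W) := by
  intro p
  have hchildren : {q | IsChild W p q}.Finite := by
    refine ((hW p.1).image fun c => (c, p.1 :: p.2)).subset ?_
    rintro ⟨c, _⟩ ⟨hc, rfl⟩
    exact ⟨c, hc, rfl⟩
  have hparent : {q | IsChild W q p}.Finite := by
    refine Set.Subsingleton.finite fun q hq q' hq' => ?_
    obtain ⟨hhead, htail⟩ := List.cons.inj (hq.2.symm.trans hq'.2)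
    exact Prod.ext hhead htail
  refine (hchildren.union hparent).subset fun q ⟨hne, R, hR⟩ => ?_
  have hg : Guarded2 (unravel A W) Set.univ p q := ⟨R, trivial, hR⟩
  exact hg.treeAdj.resolve_left hne.symm

/-- `W` selects, for every element, neighbours that realise all combinations of a 2-type and a type
of depth `K` that are realised by its neighbours. -/
structure SelectsSuccessors (A : Str U B) (SU : Set U) (SB : Set B) (K : ℕ)
    (W : A.Dom → Set A.Dom) : Prop where
  subset_neighbors : ∀ a, W a ⊆ neighbors A SB a
  exists_mem : ∀ a, ∀ a' ∈ neighbors A SB a,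
    ∃ c ∈ W a, atp2 A SU SB a c = atp2 A SU SB a a' ∧ KBisim A A SU SB K c a'

theorem exists_finite_selectsSuccessors (hU : SU.Finite) (hB : SB.Finite) (A : Str U B) (K : ℕ) :
    ∃ W, SelectsSuccessors A SU SB K W ∧ ∀ a, (W a).Finite := by
  choose W hsub hbij using fun a => Set.exists_subset_bijOn (neighbors A SB a)
    fun a' => (atp2 A SU SB a a', kType A SU SB K a')
  refine ⟨W, ⟨hsub, fun a a' ha' => ?_⟩, fun a => ?_⟩
  · obtain ⟨c, hc, heq⟩ := (hbij a).surjOn ⟨a', ha', rfl⟩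
    exact ⟨c, hc, congrArg Prod.fst heq, kBisim_iff_kType_eq.2 (congrArg Prod.snd heq)⟩
  · refine (hbij a).finite_iff_finite.2 ((finite_possibleSuccessors hU hB K).subset ?_)
    exact snd_kType_succ_subset_possibleSuccessors A K a

namespace SelectsSuccessors

variable {K : ℕ}

theorem ne_fst_of_treeAdj (hW : SelectsSuccessors A SU SB K W) (h : TreeAdj W p q)
    (hne : q ≠ p) : q.1 ≠ p.1 := by
  obtain rfl | hchild | hchild := h
  · exact absurd rfl hne
  · exact (hW.subset_neighbors _ hchild.1).1
  · exact (hW.subset_neighbors _ hchild.1).1.symm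

theorem kBisim_unravel (hW : SelectsSuccessors A SU SB K W) {j : ℕ} (hj : j ≤ K)
    (p : (unravel A W).Dom) : KBisim A (unravel A W) SU SB j p.1 p := by
  induction j generalizing p with
  | zero => exact atp1_unravel.symm
  | succ j ih =>
    specialize ih (Nat.le_of_succ_le hj)
    refine ⟨atp1_unravel.symm, fun a' hne hg => ?_, fun q hne hg => ?_⟩
    · obtain ⟨c, hc, hat, hk⟩ := hW.exists_mem p.1 a' ⟨hne, hg⟩
      let q : (unravel A W).Dom := (c, p.1 :: p.2)
      have hadj : TreeAdj W p q := .inr (.inl ⟨hc, rfl⟩)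
      have hqp : q ≠ p := fun h => List.cons_ne_self p.1 p.2 (congrArg Prod.snd h)
      exact ⟨q, hqp, hat.symm.trans (atp2_unravel_of_treeAdj hadj).symm,
        (hk.symm.mono (Nat.le_of_succ_le hj)).trans (ih q)⟩
    · exact ⟨q.1, hW.ne_fst_of_treeAdj hg.treeAdj hne,
        (atp2_unravel_of_treeAdj hg.treeAdj).symm, ih q⟩

theorem globalKBisim_unravel (hW : SelectsSuccessors A SU SB K W) :
    GlobalKBisim A (unravel A W) SU SB K :=
  ⟨fun a => ⟨(a, []), hW.kBisim_unravel le_rfl (a, [])⟩,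
    fun p => ⟨p.1, hW.kBisim_unravel le_rfl p⟩⟩

end SelectsSuccessors

theorem exists_finiteOutdeg_globalKBisim (hU : SU.Finite) (hB : SB.Finite) (A : Str U B) (K : ℕ) :
    ∃ A' : Str U B, FiniteOutdeg A' ∧ GlobalKBisim A A' SU SB K := by
  obtain ⟨W, hW, hfin⟩ := exists_finite_selectsSuccessors hU hB A K
  exact ⟨unravel A W, finiteOutdeg_unravel hfin, hW.globalKBisim_unravel⟩

end Unravelling

theorem Fml.finite_upreds (φ : Fml U B) : φ.upreds.Finite := by
  induction φ with
  | uatom => exact Set.finite_singleton _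
  | batom | eqv | fls => exact Set.finite_empty
  | neg _ ih | all _ _ ih | ex _ _ ih => exact ih
  | conj _ _ ih₁ ih₂ | disj _ _ ih₁ ih₂ | impl _ _ ih₁ ih₂ => exact ih₁.union ih₂

theorem Fml.finite_bpreds (φ : Fml U B) : φ.bpreds.Finite := by
  induction φ with
  | batom => exact Set.finite_singleton _
  | uatom | eqv | fls => exact Set.finite_empty
  | neg _ ih | all _ _ ih | ex _ _ ih => exact ih
  | conj _ _ ih₁ ih₂ | disj _ _ ih₁ ih₂ | impl _ _ ih₁ ih₂ => exact ih₁.union ih₂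

theorem gf2Entails_of_forall_finiteOutdeg {SU : Set U} {SB : Set B} {φ₁ φ₂ : Fml U B}
    (h1 : IsGF2 φ₁) (h1s : φ₁.IsSentence)
    (h : ∀ A : Str U B, SatS A φ₁ → FiniteOutdeg A →
      ∃ Bm : Str U B, SatS Bm φ₂ ∧ ∀ k, GlobalKBisim A Bm SU SB k) :
    GF2Entails SU SB φ₁ φ₂ := by
  intro ψ hψ hcons A hA
  obtain ⟨A', hA', hglob⟩ := exists_finiteOutdeg_globalKBisim
    (φ₁.finite_upreds.union ψ.finite_upreds) (φ₁.finite_bpreds.union ψ.finite_bpreds) A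
    (max φ₁.gdepth ψ.gdepth)
  have hφ₁ : IsGF2Sentence (φ₁.upreds ∪ ψ.upreds) (φ₁.bpreds ∪ ψ.bpreds) φ₁ :=
    ⟨h1, h1s, Set.subset_union_left, Set.subset_union_left⟩
  have hψ' : IsGF2Sentence (φ₁.upreds ∪ ψ.upreds) (φ₁.bpreds ∪ ψ.bpreds) ψ :=
    ⟨hψ.1, hψ.2.1, Set.subset_union_right, Set.subset_union_right⟩
  have hA'φ₁ : SatS A' φ₁ := (hφ₁.satS_iff_of_globalKBisim (le_max_left _ _) hglob).1 hA
  obtain ⟨Bm, hBm, hAB⟩ := h A' hA'φ₁ hA'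
  have hA'ψ : SatS A' ψ := (hψ.satS_iff_of_globalKBisim le_rfl (hAB ψ.gdepth)).2 (hcons Bm hBm)
  exact (hψ'.satS_iff_of_globalKBisim (le_max_right _ _) hglob).2 hA'ψ

theorem gf2_entails_iff_bisimulation_conditions_general {φ₁ φ₂ : Fml U B} {SU : Set U}
    {SB : Set B} (hSU : SU.Finite) (hSB : SB.Finite) (h1 : IsGF2 φ₁) (h1s : φ₁.IsSentence) :
    GF2Entails SU SB φ₁ φ₂ ↔
    (∀ A : Str U B, SatS A φ₁ → FiniteOutdeg A →
      ∃ Bm : Str U B, SatS Bm φ₂ ∧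
        (∀ a, ∃ b, Bisim A Bm SU SB a b) ∧
        (∀ b, ∀ k : ℕ, ∃ a, KBisim A Bm SU SB k a b)) := by
  refine ⟨fun h A hA hfin => ?_, fun h => gf2Entails_of_forall_finiteOutdeg h1 h1s ?_⟩
  · obtain ⟨Bm, hBm, hsat, hglob⟩ := h.exists_countablySaturated hSU hSB hA
    exact ⟨Bm, hBm, fun a => hsat.exists_bisim hSU hSB hfin fun k => (hglob k).1 a,
      fun b k => (hglob k).2 b⟩
  · intro A hA hfin
    obtain ⟨Bm, hBm, hbisim, hkbisim⟩ := h A hA hfin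
    exact ⟨Bm, hBm, fun k => ⟨fun a => (hbisim a).imp fun _ hab => hab.kBisim k,
      fun b => hkbisim b k⟩⟩

/-- Theorem 4 of the paper: `φ₁ ⊨_Σ φ₂` iff for every model
`𝔄` of `φ₁` of finite outdegree there is a model `𝔅` of `φ₂` such that (1)
every `a ∈ A` is GF²(Σ)-bisimilar to some `b ∈ B` and (2) every `b ∈ B` is
k-GF²(Σ)-bisimilar to some `a ∈ A`, for every `k`. -/
theorem gf2_entails_iff_bisimulation_conditions
    {U B : Type} (φ₁ φ₂ : Fml U B) (SU : Set U) (SB : Set B)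
    (hSU : SU.Finite) (hSB : SB.Finite)
    (h1 : IsGF2 φ₁) (h1s : φ₁.IsSentence)
    (h2 : IsGF2 φ₂) (h2s : φ₂.IsSentence) :
    GF2Entails SU SB φ₁ φ₂ ↔
    (∀ A : Str U B, SatS A φ₁ → FiniteOutdeg A →
      ∃ Bm : Str U B, SatS Bm φ₂ ∧
        (∀ a, ∃ b, Bisim A Bm SU SB a b) ∧
        (∀ b, ∀ k : ℕ, ∃ a, KBisim A Bm SU SB k a b)) :=
  gf2_entails_iff_bisimulation_conditions_general hSU hSB h1 h1s

end GFC
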